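/- Let Y₁,…,Y_m ∈ ℝⁿ be vectors each of whose coordinates sum to 1, let Y be the m×n matrix with rows Y₁,…,Y_m, let L be the affine span of {Y₁,…,Y_m}, and let P be the orthogonal projection of the origin of ℝⁿ onto L. Then P lies in the interior, relative to L, of the convex hull Conv{Y₁,…,Y_m} if and only if there exists a vector α ∈ ℝ^m with all coordinates positive such that YYᵗα = [1]_m, where [1]_m ∈ ℝ^m is the vector with all coordinates equal to 1. -/

import Mathlib

/-!
A point of the affine span `L` of a finite family lies in the interior, relative to `L`, of the
convex hull exactly when it is a convex combination of the family with *strictly positive* weights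
(`mem_interior_convexHull_iff_pos_weights`). If `p` is interior, it can be pushed slightly away from
the barycentre without leaving the hull, so `p` is a proper mixture of a hull point and the
barycentre. Conversely, affine weights of a point of `L` can be chosen to depend continuously on the
point and to equal the given positive weights at `p`, so they stay positive near `p`.

The projection `P` of the origin satisfies `⟪P, Y a⟫ = ‖P‖²` for all `a`, and it is nonzero because
its coordinates sum to `1`. Hence positive weights `w` for `P` give the positive solution
`α = w / ‖P‖²`. Conversely, if `Y Yᵗ α = [1]` with `α` positive, normalise `α` to have sum `1`: the
resulting convex combination of the `Y a` has the same inner product with every `Y a`, so it is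
orthogonal to the direction of `L` and therefore equals `P`.
-/

section Weights

variable {ι E : Type*} [Fintype ι] [NormedAddCommGroup E] [NormedSpace ℝ E]

lemma exists_weights_of_mem_affineSpan {Y : ι → E} {x : E}
    (hx : x ∈ affineSpan ℝ (Set.range Y)) :
    ∃ w : ι → ℝ, ∑ a, w a = 1 ∧ ∑ a, w a • Y a = x := by
  obtain ⟨w, hw, rfl⟩ := eq_affineCombination_of_mem_affineSpan_of_fintype hx
  exact ⟨w, hw, (Finset.affineCombination_eq_linear_combination _ _ _ hw).symm⟩

lemma sum_smul_mem_affineSpan {Y : ι → E} {w : ι → ℝ} (hw : ∑ a, w a = 1) :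
    ∑ a, w a • Y a ∈ affineSpan ℝ (Set.range Y) := by
  rw [← Finset.affineCombination_eq_linear_combination _ _ _ hw]
  exact affineCombination_mem_affineSpan hw _

lemma exists_weights_of_mem_convexHull {Y : ι → E} {x : E}
    (hx : x ∈ convexHull ℝ (Set.range Y)) :
    ∃ w : ι → ℝ, (∀ a, 0 ≤ w a) ∧ ∑ a, w a = 1 ∧ ∑ a, w a • Y a = x := by
  classical
  rw [convexHull_range_eq_exists_affineCombination] at hx
  obtain ⟨s, w, hw0, hw1, rfl⟩ := hx
  refine ⟨fun a => if a ∈ s then w a else 0, fun a => ?_, ?_, ?_⟩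
  · dsimp only
    split_ifs with h
    exacts [hw0 a h, le_rfl]
  · simpa using hw1
  · rw [Finset.affineCombination_eq_linear_combination _ _ _ hw1]
    simp [ite_smul]

/-- Away from the barycentre there is room left inside the hull, so a relatively interior point is a
proper mixture of a hull point and the barycentre. -/
lemma exists_pos_weights_of_mem_interior {Y : ι → E} {p : E}
    (hp : p ∈ affineSpan ℝ (Set.range Y))
    (hint : (⟨p, hp⟩ : ↥(affineSpan ℝ (Set.range Y))) ∈
      interior {x : ↥(affineSpan ℝ (Set.range Y)) | (x : E) ∈ convexHull ℝ (Set.range Y)}) :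
    ∃ w : ι → ℝ, (∀ a, 0 < w a) ∧ ∑ a, w a = 1 ∧ ∑ a, w a • Y a = p := by
  obtain ⟨w₀, hw₀, -⟩ := exists_weights_of_mem_affineSpan hp
  have hne : Nonempty ι := by
    by_contra h
    rw [not_nonempty_iff] at h
    simp at hw₀
  have hcard : (0 : ℝ) < Fintype.card ι := by exact_mod_cast Fintype.card_pos
  set k : ℝ := (Fintype.card ι : ℝ)⁻¹ with hk
  have hkpos : 0 < k := inv_pos.2 hcard
  have hksum : ∑ _a : ι, k = 1 := by
    simp [hk, hcard.ne']
  set c : E := ∑ a, k • Y a with hc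
  have hcL : c ∈ affineSpan ℝ (Set.range Y) := sum_smul_mem_affineSpan hksum
  let γ : ℝ → ↥(affineSpan ℝ (Set.range Y)) := fun t =>
    ⟨AffineMap.lineMap p c t, AffineMap.lineMap_mem t hp hcL⟩
  have hγ : Continuous γ := Continuous.subtype_mk AffineMap.lineMap_continuous _
  have hγ0 : γ 0 = ⟨p, hp⟩ := by simp [γ]
  have hnear : ∀ᶠ t in nhds (0 : ℝ), (γ t : E) ∈ convexHull ℝ (Set.range Y) := by
    have := mem_interior_iff_mem_nhds.1 hint
    rw [← hγ0] at this
    exact hγ.continuousAt this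
  obtain ⟨δ, hδ, hball⟩ := Metric.eventually_nhds_iff.1 hnear
  have hz := @hball (-(δ / 2)) (by rw [Real.dist_eq]; rw [sub_zero, abs_neg, abs_of_pos (by positivity)]; linarith)
  obtain ⟨u, hu0, hu1, hu⟩ := exists_weights_of_mem_convexHull hz
  set ε := δ / 2 with hε
  have hεpos : 0 < ε := by positivity
  have h1ε : (1 + ε) ≠ 0 := by positivity
  -- `z = p - ε (c - p)` lies in the hull, so `p = (z + ε c) / (1 + ε)`.
  refine ⟨fun a => (1 + ε)⁻¹ * (u a + ε * k), fun a => ?_, ?_, ?_⟩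
  · have := hu0 a
    positivity
  · rw [← Finset.mul_sum, Finset.sum_add_distrib, hu1, ← Finset.mul_sum, hksum, mul_one,
      inv_mul_cancel₀ h1ε]
  · simp only [mul_smul, add_smul]
    rw [← Finset.smul_sum, Finset.sum_add_distrib, hu, ← Finset.smul_sum, ← hc,
      inv_smul_eq_iff₀ h1ε]
    simp only [γ, AffineMap.lineMap_apply_module]
    module

/-- Weights of nearby points of the affine span can be chosen continuously, via a linear right
inverse of `u ↦ ∑ a, u a • (Y a - p)`; hence positivity of the weights persists. -/
lemma mem_interior_of_pos_weights {Y : ι → E} {p : E}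
    (hp : p ∈ affineSpan ℝ (Set.range Y)) {w : ι → ℝ} (hw0 : ∀ a, 0 < w a)
    (hw1 : ∑ a, w a = 1) (hw : ∑ a, w a • Y a = p) :
    (⟨p, hp⟩ : ↥(affineSpan ℝ (Set.range Y))) ∈
      interior {x : ↥(affineSpan ℝ (Set.range Y)) | (x : E) ∈ convexHull ℝ (Set.range Y)} := by
  classical
  let T : (ι → ℝ) →ₗ[ℝ] E := Fintype.linearCombination ℝ (fun a => Y a - p)
  have hT : ∀ u : ι → ℝ, T u = ∑ a, u a • Y a - (∑ a, u a) • p := by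
    intro u
    simp [T, Fintype.linearCombination_apply, smul_sub, Finset.sum_sub_distrib, Finset.sum_smul]
  obtain ⟨S, hS⟩ := T.rangeRestrict.exists_rightInverse_of_surjective T.range_rangeRestrict
  have hScont : Continuous S := S.continuous_of_finiteDimensional
  have hmem : ∀ x : ↥(affineSpan ℝ (Set.range Y)), (x : E) - p ∈ LinearMap.range T := by
    intro x
    obtain ⟨v, hv1, hv⟩ := exists_weights_of_mem_affineSpan x.2
    exact ⟨v, by rw [hT, hv1, hv, one_smul]⟩
  let U : ↥(affineSpan ℝ (Set.range Y)) → ι → ℝ := fun x => S ⟨(x : E) - p, hmem x⟩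
  have hU : Continuous U :=
    hScont.comp (Continuous.subtype_mk (continuous_subtype_val.sub continuous_const) _)
  have hTU : ∀ x, T (U x) = (x : E) - p := fun x =>
    congrArg Subtype.val (LinearMap.congr_fun hS ⟨(x : E) - p, hmem x⟩)
  have hU0 : U ⟨p, hp⟩ = 0 := by
    have : (⟨p - p, hmem ⟨p, hp⟩⟩ : LinearMap.range T) = 0 := Subtype.ext (sub_self p)
    simp only [U, this, map_zero]
  -- The correction by `(∑ b, U x b) * w a` makes the weights sum to `1`.
  let W : ↥(affineSpan ℝ (Set.range Y)) → ι → ℝ := fun x a =>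
    w a + (U x a - (∑ b, U x b) * w a)
  have hUa : ∀ a, Continuous fun x => U x a := fun a => (continuous_apply a).comp hU
  have hW : ∀ a, Continuous fun x => W x a := fun a =>
    continuous_const.add ((hUa a).sub
      ((continuous_finsetSum _ fun b _ => hUa b).mul continuous_const))
  have hpos : ∀ᶠ x in nhds (⟨p, hp⟩ : ↥(affineSpan ℝ (Set.range Y))), ∀ a, 0 < W x a := by
    rw [Filter.eventually_all]
    intro a
    refine (hW a).continuousAt.eventually (lt_mem_nhds ?_)
    simpa [W, hU0] using hw0 a
  rw [mem_interior_iff_mem_nhds]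
  filter_upwards [hpos] with x hx
  refine mem_convexHull_of_exists_fintype (W x) Y (fun a => (hx a).le) ?_
    (fun a => Set.mem_range_self a) ?_
  · simp only [W, Finset.sum_add_distrib, Finset.sum_sub_distrib, ← Finset.mul_sum, hw1]
    ring
  · have h := hTU x
    rw [hT] at h
    simp only [W, add_smul, sub_smul, mul_smul, Finset.sum_add_distrib, Finset.sum_sub_distrib,
      ← Finset.smul_sum, hw]
    rw [h]
    abel

lemma mem_interior_convexHull_iff_pos_weights {Y : ι → E} {p : E}
    (hp : p ∈ affineSpan ℝ (Set.range Y)) :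
    (⟨p, hp⟩ : ↥(affineSpan ℝ (Set.range Y))) ∈
      interior {x : ↥(affineSpan ℝ (Set.range Y)) | (x : E) ∈ convexHull ℝ (Set.range Y)} ↔
    ∃ w : ι → ℝ, (∀ a, 0 < w a) ∧ ∑ a, w a = 1 ∧ ∑ a, w a • Y a = p :=
  ⟨exists_pos_weights_of_mem_interior hp,
    fun ⟨_, hw0, hw1, hw⟩ => mem_interior_of_pos_weights hp hw0 hw1 hw⟩

end Weights


open scoped BigOperators RealInnerProductSpace

/-- Let `Y₁, …, Y_m ∈ ℝⁿ` have coordinate sums equal to `1`, let `L` be their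
affine span and `P` the orthogonal projection of the origin onto `L`. Then `P` lies in the
interior, relative to `L`, of the convex hull of the `Yₐ`'s if and only if `Y Yᵗ α = [1]` has a
solution `α` with all coordinates positive. -/
theorem projection_interior_iff_positive_solution {n m : ℕ}
    (Y : Fin m → EuclideanSpace ℝ (Fin n))
    (hsum : ∀ a : Fin m, ∑ i, Y a i = 1)
    (P : EuclideanSpace ℝ (Fin n))
    (hP : P ∈ affineSpan ℝ (Set.range Y))
    (hproj : ∀ q ∈ affineSpan ℝ (Set.range Y), ⟪P, q - P⟫ = 0) :
    ((⟨P, hP⟩ : ↥(affineSpan ℝ (Set.range Y))) ∈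
        interior {x : ↥(affineSpan ℝ (Set.range Y)) |
          (x : EuclideanSpace ℝ (Fin n)) ∈ convexHull ℝ (Set.range Y)}) ↔
      ∃ α : Fin m → ℝ, (∀ a, 0 < α a) ∧
        ∀ a : Fin m, ∑ b : Fin m, (∑ i, Y a i * Y b i) * α b = 1 := by
  -- The system `Y Yᵗ α = [1]`, read as inner products with `∑ b, α b • Y b`.
  have key : ∀ (α : Fin m → ℝ) (a : Fin m),
      ∑ b : Fin m, (∑ i, Y a i * Y b i) * α b = ⟪Y a, ∑ b, α b • Y b⟫ := by
    intro α a
    rw [inner_sum]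
    refine Finset.sum_congr rfl fun b _ => ?_
    rw [real_inner_smul_right, PiLp.inner_apply, mul_comm]
    congr 1
    refine Finset.sum_congr rfl fun i _ => ?_
    simp [mul_comm]
  simp only [key]
  rw [mem_interior_convexHull_iff_pos_weights hP]
  constructor
  · rintro ⟨w, hw0, hw1, hw⟩
    have hP0 : P ≠ 0 := by
      intro h0
      have h1 : ∑ i, P i = 1 := by
        rw [← hw]
        simp only [WithLp.ofLp_sum, WithLp.ofLp_smul, Finset.sum_apply, Pi.smul_apply, smul_eq_mul]
        rw [Finset.sum_comm]
        simp only [← Finset.mul_sum, hsum, mul_one, hw1]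
      simp [h0] at h1
    have hPP : ⟪P, P⟫ ≠ 0 := inner_self_ne_zero.2 hP0
    have hPpos : 0 < ⟪P, P⟫ := real_inner_self_pos.2 hP0
    refine ⟨fun a => ⟪P, P⟫⁻¹ * w a, fun a => mul_pos (inv_pos.2 hPpos) (hw0 a), fun a => ?_⟩
    have ha := hproj (Y a) (subset_affineSpan ℝ _ (Set.mem_range_self a))
    rw [inner_sub_right, sub_eq_zero] at ha
    simp only [mul_smul, ← Finset.smul_sum, hw]
    rw [real_inner_smul_right, real_inner_comm P (Y a), ha, inv_mul_cancel₀ hPP]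
  · rintro ⟨α, hα0, hα⟩
    obtain ⟨v, hv1, hv⟩ := exists_weights_of_mem_affineSpan hP
    have hne : (Finset.univ : Finset (Fin m)).Nonempty := by
      by_contra h
      rw [Finset.not_nonempty_iff_eq_empty] at h
      simp [h] at hv1
    set s := ∑ a, α a with hs
    have hspos : 0 < s := Finset.sum_pos (fun a _ => hα0 a) hne
    have hw1 : ∑ a, s⁻¹ * α a = 1 := by
      rw [← Finset.mul_sum, inv_mul_cancel₀ hspos.ne']
    refine ⟨fun a => s⁻¹ * α a, fun a => mul_pos (inv_pos.2 hspos) (hα0 a), hw1, ?_⟩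
    set q := ∑ a, (s⁻¹ * α a) • Y a with hq
    have hqL : q ∈ affineSpan ℝ (Set.range Y) := sum_smul_mem_affineSpan hw1
    have hqY : ∀ a, ⟪Y a, q⟫ = s⁻¹ := by
      intro a
      simp only [hq, mul_smul, ← Finset.smul_sum]
      rw [real_inner_smul_right, hα, mul_one]
    -- `⟪·, q⟫` is constant on the affine span, hence takes the same value at `P` and at `q`.
    have hconst : ∀ u : Fin m → ℝ, ∑ a, u a = 1 → ⟪∑ a, u a • Y a, q⟫ = s⁻¹ := by
      intro u hu
      simp only [sum_inner, real_inner_smul_left, hqY, ← Finset.sum_mul, hu, one_mul]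
    have hqq : ⟪q, q⟫ = s⁻¹ := hconst _ hw1
    have hPq : ⟪P, q⟫ = s⁻¹ := by rw [← hv]; exact hconst v hv1
    have h := hproj q hqL
    rw [inner_sub_right] at h
    rw [← sub_eq_zero, ← inner_self_eq_zero (𝕜 := ℝ), inner_sub_left, inner_sub_right,
      inner_sub_right, real_inner_comm P q, hqq, hPq]
    linarith
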